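/- Let 1 ≤ p < ∞, 0 < s < 1, 0 < γ < 1, E ⊆ R^N open and bounded, and F ⊆ E compact with F ⋐ B_R(x_0) for some ball, satisfying cap_{s,p}(F; B_R(x_0)) = 0. Then W̃^{s,p}_0(E \ F) = W̃^{s,p}_0(E); in particular λ^s_{p,q}(E) = λ^s_{p,q}(E \ F) for every admissible exponent q. -/

import Mathlib

open MeasureTheory Metric Filter
open scoped ENNReal

noncomputable section

abbrev Euc (N : ℕ) := EuclideanSpace ℝ (Fin N)

/-- The (p-th power of the) Gagliardo–Slobodeckii seminorm on `ℝ^N`. -/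
def gag (N : ℕ) (p s : ℝ) (u : Euc N → ℝ) : ℝ :=
  ∫ z : Euc N × Euc N, |u z.1 - u z.2| ^ p / ‖z.1 - z.2‖ ^ ((N : ℝ) + s * p)

/-- `u ∈ C^∞_0(Ω)`: smooth with compact support contained in `Ω`. -/
def TestOn {N : ℕ} (Ω : Set (Euc N)) (u : Euc N → ℝ) : Prop :=
  ContDiff ℝ (⊤ : ℕ∞) u ∧ HasCompactSupport u ∧ tsupport u ⊆ Ω

/-- The fractional principal frequency `λ^s_{p,q}(Ω)`. -/
def lam (N : ℕ) (p q s : ℝ) (Ω : Set (Euc N)) : ℝ :=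
  sInf { c | ∃ u : Euc N → ℝ, TestOn Ω u ∧ (∫ x in Ω, |u x| ^ q) = 1 ∧ c = gag N p s u }

/-- The homogeneous relative `(s,p)`-capacity of `A` in `E`. -/
def fcap (N : ℕ) (p s : ℝ) (A E : Set (Euc N)) : ℝ :=
  sInf { c | ∃ φ : Euc N → ℝ, TestOn E φ ∧ (∀ x ∈ A, 1 ≤ φ x) ∧ c = gag N p s φ }

/-- The fractional `s`-perimeter of a set `A ⊆ ℝ^N`. -/
def sPer (N : ℕ) (s : ℝ) (A : Set (Euc N)) : ℝ :=
  ∫ z : Euc N × Euc N,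
    |A.indicator (fun _ => (1 : ℝ)) z.1 - A.indicator (fun _ => (1 : ℝ)) z.2| /
      ‖z.1 - z.2‖ ^ ((N : ℝ) + s)

/-- An open set with smooth boundary, described as a regular sublevel set of a smooth function. -/
def SmoothBdry {N : ℕ} (O : Set (Euc N)) : Prop :=
  ∃ f : Euc N → ℝ, ContDiff ℝ (⊤ : ℕ∞) f ∧ O = {x | f x < 0} ∧ ∀ x, f x = 0 → fderiv ℝ f x ≠ 0

/-- The sharp constant in the fractional Sobolev inequality. -/
def sobConst (N : ℕ) (p s : ℝ) : ℝ :=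
  sSup {c | ∃ u : Euc N → ℝ, TestOn Set.univ u ∧ gag N p s u = 1 ∧
    c = (∫ x, |u x| ^ ((N : ℝ) * p / (N - s * p))) ^ (((N : ℝ) - s * p) / N)}

/-- Membership in `W̃^{s,p}_0(Ω)`, the closure of `C^∞_0(Ω)` in `W^{s,p}(ℝ^N)`. -/
def MemW0 (N : ℕ) (p s : ℝ) (Ω : Set (Euc N)) (V : Euc N → ℝ) : Prop :=
  ∃ u : ℕ → Euc N → ℝ, (∀ n, TestOn Ω (u n)) ∧
    Filter.Tendsto (fun n => (∫ x, |u n x - V x| ^ p) + gag N p s (fun x => u n x - V x))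
      Filter.atTop (nhds 0)

/-- The relative (local) `p`-capacity of `A` in `E`. -/
def pcap (N : ℕ) (p : ℝ) (A E : Set (Euc N)) : ℝ :=
  sInf { c | ∃ φ : Euc N → ℝ, TestOn E φ ∧ (∀ x ∈ A, 1 ≤ φ x) ∧
    c = ∫ x in E, ‖fderiv ℝ φ x‖ ^ p }

/-- The sharp constant in the local `p`-Poincaré inequality on `E`. -/
def lamLoc (N : ℕ) (p : ℝ) (E : Set (Euc N)) : ℝ :=
  sInf { c | ∃ u : Euc N → ℝ, TestOn E u ∧ (∫ x in E, |u x| ^ p) = 1 ∧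
    c = ∫ x in E, ‖fderiv ℝ u x‖ ^ p }

/-- The compact set `A ⊆ closure (B_r(x0))` is `(s,p,γ)`-negligible. -/
def Negligible (N : ℕ) (p s γ : ℝ) (x0 : Euc N) (r : ℝ) (A : Set (Euc N)) : Prop :=
  fcap N p s A (ball x0 (2 * r)) ≤ γ * fcap N p s (closedBall x0 r) (ball x0 (2 * r))

/-- The fractional `(p,γ)`-capacitary inradius of order `s` of `Ω` (valued in `ℝ≥0∞`). -/
def capInr (N : ℕ) (p s γ : ℝ) (Ω : Set (Euc N)) : ℝ≥0∞ :=
  sSup {R | ∃ r : ℝ, 0 < r ∧ R = ENNReal.ofReal r ∧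
    ∃ x0 : Euc N, Negligible N p s γ x0 r (closedBall x0 r \ Ω)}

end

/-! Vanishing capacity provides test functions on the ball that are at least `1` on `F` and whose
Gagliardo energy tends to zero; composing them with a Lipschitz smooth transition turns them into
cutoffs `ψ k` with values in `[0, 1]` and equal to `1` near `F`. They vanish off the ball, whose
complement has positive measure, so their values can be read off from their difference quotients:
along a subsequence `ψ k → 0` almost everywhere. By the product rule and dominated convergence,
replacing a test function `u` by `u * (1 - ψ k)`, which is supported away from `F`, changes `u` by
`o(1)` in `W^{s,p}`. This gives the density of `C^∞_0(E \ F)` in `W̃^{s,p}_0(E)`, and, after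
normalising in `L^q`, the equality of the principal frequencies. -/

open Set Topology NNReal

lemma sInf_eq_sInf_of_forall_exists_lt {S T : Set ℝ} (hS : BddBelow S) (hTS : T ⊆ S)
    (h : ∀ c ∈ S, ∀ d, c < d → ∃ t ∈ T, t < d) : sInf S = sInf T := by
  rcases S.eq_empty_or_nonempty with rfl | ⟨c, hc⟩
  · rw [subset_empty_iff.1 hTS]
  · obtain ⟨t, ht, -⟩ := h c hc (c + 1) (lt_add_one c)
    refine le_antisymm (csInf_le_csInf hS ⟨t, ht⟩ hTS)
      (le_csInf ⟨c, hc⟩ fun c hc => le_of_forall_gt fun d hcd => ?_)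
    obtain ⟨t, ht, htd⟩ := h c hc d hcd
    exact (csInf_le (hS.mono hTS) ht).trans_lt htd

section Lp

variable {α : Type*} [MeasurableSpace α] {μ : Measure α}

lemma integrable_abs_rpow_iff_memLp_abs {p : ℝ} (hp : 0 < p) {f : α → ℝ} :
    Integrable (fun x => |f x| ^ p) μ ↔ MemLp (fun x => |f x|) (ENNReal.ofReal p) μ := by
  have hp' : ENNReal.ofReal p ≠ 0 := (ENNReal.ofReal_pos.2 hp).ne'
  have norm_rpow (x : α) : ‖|f x|‖ ^ (ENNReal.ofReal p).toReal = |f x| ^ p := by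
    rw [norm_abs_eq_norm, Real.norm_eq_abs, ENNReal.toReal_ofReal hp.le]
  refine ⟨fun h => ?_, fun h => ?_⟩
  · have hmeas : AEStronglyMeasurable (fun x => |f x|) μ := by
      refine (h.aestronglyMeasurable.aemeasurable.pow_const p⁻¹).aestronglyMeasurable.congr ?_
      exact .of_forall fun x => Real.rpow_rpow_inv (abs_nonneg _) hp.ne'
    rw [← integrable_norm_rpow_iff hmeas hp' ENNReal.ofReal_ne_top]
    simpa only [norm_rpow] using h
  · simpa only [norm_rpow] using h.integrable_norm_rpow hp' ENNReal.ofReal_ne_top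

/- Both sides take the junk value `0` when `|f| ^ p` is not integrable. -/
lemma integral_abs_rpow_eq_lpNorm_rpow {p : ℝ} (hp : 0 < p) (f : α → ℝ) :
    ∫ x, |f x| ^ p ∂μ = lpNorm (fun x => |f x|) (ENNReal.ofReal p) μ ^ p := by
  by_cases hf : MemLp (fun x => |f x|) (ENNReal.ofReal p) μ
  · rw [lpNorm_eq_integral_norm_rpow_toReal (ENNReal.ofReal_pos.2 hp).ne' ENNReal.ofReal_ne_top
      hf.aestronglyMeasurable, ENNReal.toReal_ofReal hp.le,
      Real.rpow_inv_rpow (integral_nonneg fun x => by positivity) hp.ne']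
    simp only [norm_abs_eq_norm, Real.norm_eq_abs]
  · rw [lpNorm_of_not_memLp hf, Real.zero_rpow hp.ne',
      integral_undef fun h => hf ((integrable_abs_rpow_iff_memLp_abs hp).1 h)]

lemma tendsto_eLpNorm_zero_iff_integral {p : ℝ} (hp : 0 < p) {f : ℕ → α → ℝ}
    (hf : ∀ k, MemLp (f k) (ENNReal.ofReal p) μ) :
    Tendsto (fun k => eLpNorm (f k) (ENNReal.ofReal p) μ) atTop (𝓝 0) ↔
      Tendsto (fun k => ∫ x, |f k x| ^ p ∂μ) atTop (𝓝 0) := by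
  have lpNorm_eq (k : ℕ) : eLpNorm (f k) (ENNReal.ofReal p) μ =
      ENNReal.ofReal (lpNorm (f k) (ENNReal.ofReal p) μ) := (ofReal_lpNorm (hf k)).symm
  simp only [lpNorm_eq, integral_abs_rpow_eq_lpNorm_rpow hp,
    lpNorm_fun_abs (hf _).aestronglyMeasurable]
  refine ⟨fun h => ?_, fun h => ?_⟩
  · have h' := (ENNReal.tendsto_toReal ENNReal.zero_ne_top).comp h
    simpa [Function.comp_def, Real.zero_rpow hp.ne'] using h'.rpow_const (Or.inr hp.le)
  · have h' := h.rpow_const (p := p⁻¹) (Or.inr (by positivity))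
    simpa [Real.rpow_rpow_inv, Real.zero_rpow, hp.ne'] using ENNReal.tendsto_ofReal h'

lemma exists_strictMono_ae_tendsto_zero_of_eLpNorm {p : ℝ≥0∞} (hp : p ≠ 0) {f : ℕ → α → ℝ}
    (hf : ∀ k, AEStronglyMeasurable (f k) μ)
    (hlim : Tendsto (fun k => eLpNorm (f k) p μ) atTop (𝓝 0)) :
    ∃ n : ℕ → ℕ, StrictMono n ∧ ∀ᵐ x ∂μ, Tendsto (fun k => f (n k) x) atTop (𝓝 0) :=
  (tendstoInMeasure_of_tendsto_eLpNorm hp hf aestronglyMeasurable_zero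
    (by simpa only [sub_zero] using hlim)).exists_seq_tendsto_ae

lemma tendsto_integral_abs_rpow_of_dominated {p : ℝ} (hp : 0 < p) {f : ℕ → α → ℝ} {f₀ g : α → ℝ}
    (hf : ∀ k, AEStronglyMeasurable (f k) μ) (hg : MemLp g (ENNReal.ofReal p) μ)
    (hle : ∀ k x, |f k x| ≤ |g x|) (hae : ∀ᵐ x ∂μ, Tendsto (fun k => f k x) atTop (𝓝 (f₀ x))) :
    Tendsto (fun k => ∫ x, |f k x| ^ p ∂μ) atTop (𝓝 (∫ x, |f₀ x| ^ p ∂μ)) := by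
  refine tendsto_integral_of_dominated_convergence (fun x => |g x| ^ p)
    (fun k => ((hf k).norm.aemeasurable.pow_const p).aestronglyMeasurable)
    ((integrable_abs_rpow_iff_memLp_abs hp).2 hg.abs)
    (fun k => .of_forall fun x => ?_) ?_
  · rw [Real.norm_of_nonneg (by positivity)]
    exact Real.rpow_le_rpow (abs_nonneg _) (hle k x) hp.le
  · filter_upwards [hae] with x hx using hx.abs.rpow_const (Or.inr hp.le)

lemma tendsto_eLpNorm_mul_zero_of_ae_tendsto_zero {p : ℝ} (hp : 0 < p) {φ : ℕ → α → ℝ} {g : α → ℝ}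
    (hφ : ∀ k, AEStronglyMeasurable (φ k) μ) (hφ1 : ∀ k x, |φ k x| ≤ 1)
    (hae : ∀ᵐ x ∂μ, Tendsto (fun k => φ k x) atTop (𝓝 0)) (hg : MemLp g (ENNReal.ofReal p) μ) :
    Tendsto (fun k => eLpNorm (fun x => φ k x * g x) (ENNReal.ofReal p) μ) atTop (𝓝 0) := by
  have hle (k : ℕ) (x : α) : |φ k x * g x| ≤ |g x| := by
    rw [abs_mul]
    exact mul_le_of_le_one_left (abs_nonneg _) (hφ1 k x)
  have hmeas (k : ℕ) : AEStronglyMeasurable (fun x => φ k x * g x) μ :=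
    (hφ k).mul hg.aestronglyMeasurable
  rw [tendsto_eLpNorm_zero_iff_integral hp fun k => hg.mono (hmeas k) (.of_forall (hle k))]
  have hlim := tendsto_integral_abs_rpow_of_dominated (f₀ := fun _ => 0) hp hmeas hg hle (by
    filter_upwards [hae] with x hx
    simpa using hx.mul_const (g x))
  simpa [Real.zero_rpow hp.ne'] using hlim

/- That `|f k - g|` is measurable for one `k` says nothing about `|f₀ - g|`; measurability of the
latter comes from an a.e. limit along a subsequence. -/
lemma memLp_abs_sub_of_frequently {p : ℝ≥0∞} (hp : p ≠ 0) {f : ℕ → α → ℝ} {f₀ g : α → ℝ}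
    (hf : ∀ k, MemLp (fun x => f k x - f₀ x) p μ)
    (hlim : Tendsto (fun k => eLpNorm (fun x => f k x - f₀ x) p μ) atTop (𝓝 0))
    (hfreq : ∃ᶠ k in atTop, MemLp (fun x => |f k x - g x|) p μ) :
    MemLp (fun x => |f₀ x - g x|) p μ := by
  obtain ⟨n, hn, hng⟩ := extraction_of_frequently_atTop hfreq
  obtain ⟨m, -, hae⟩ := exists_strictMono_ae_tendsto_zero_of_eLpNorm hp
    (fun k => (hf (n k)).aestronglyMeasurable) (hlim.comp hn.tendsto_atTop)
  have hmeas : AEStronglyMeasurable (fun x => |f₀ x - g x|) μ := by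
    refine aestronglyMeasurable_of_tendsto_ae atTop
      (fun k => (hng (m k)).aestronglyMeasurable) ?_
    filter_upwards [hae] with x hx
    simpa using (hx.add_const (f₀ x - g x)).abs
  refine ((hng 0).add (hf (n 0)).abs).mono' hmeas (.of_forall fun x => ?_)
  simp only [Real.norm_eq_abs, abs_abs, Pi.add_apply, Pi.abs_apply]
  linarith [abs_sub_le (f₀ x) (f (n 0) x) (g x), abs_sub_comm (f₀ x) (f (n 0) x)]

lemma eventually_lpNorm_abs_sub_le {p : ℝ≥0∞} (hp : 1 ≤ p) {f : ℕ → α → ℝ} {f₀ g : α → ℝ}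
    (hf : ∀ k, MemLp (fun x => f k x - f₀ x) p μ)
    (hlim : Tendsto (fun k => eLpNorm (fun x => f k x - f₀ x) p μ) atTop (𝓝 0)) :
    ∀ᶠ k in atTop, lpNorm (fun x => |f k x - g x|) p μ ≤
      lpNorm (fun x => |f k x - f₀ x|) p μ + lpNorm (fun x => |f₀ x - g x|) p μ := by
  by_cases hfreq : ∃ᶠ k in atTop, MemLp (fun x => |f k x - g x|) p μ
  · have hg := memLp_abs_sub_of_frequently (zero_lt_one.trans_le hp).ne' hf hlim hfreq
    refine .of_forall fun k => (lpNorm_mono_real ((hf k).abs.add hg) fun x => ?_).trans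
      (lpNorm_add_le (hf k).abs hp)
    rw [Real.norm_eq_abs, abs_abs]
    exact abs_sub_le _ _ _
  · filter_upwards [not_frequently.1 hfreq] with k hk
    rw [lpNorm_of_not_memLp hk]
    exact add_nonneg lpNorm_nonneg lpNorm_nonneg

lemma eventually_integral_abs_sub_rpow_lt {p : ℝ} (hp : 1 ≤ p) {f : ℕ → α → ℝ} {f₀ g : α → ℝ}
    (hf : ∀ k, MemLp (fun x => f k x - f₀ x) (ENNReal.ofReal p) μ)
    (hlim : Tendsto (fun k => eLpNorm (fun x => f k x - f₀ x) (ENNReal.ofReal p) μ) atTop (𝓝 0))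
    {c : ℝ} (hc : ∫ x, |f₀ x - g x| ^ p ∂μ < c) :
    ∀ᶠ k in atTop, ∫ x, |f k x - g x| ^ p ∂μ < c := by
  have hp0 : 0 < p := zero_lt_one.trans_le hp
  simp only [integral_abs_rpow_eq_lpNorm_rpow hp0] at hc ⊢
  have hlim' : Tendsto (fun k => lpNorm (fun x => |f k x - f₀ x|) (ENNReal.ofReal p) μ)
      atTop (𝓝 0) := by
    simp only [lpNorm_fun_abs (hf _).aestronglyMeasurable,
      ← toReal_eLpNorm (hf _).aestronglyMeasurable]
    exact (ENNReal.tendsto_toReal ENNReal.zero_ne_top).comp hlim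
  have hbound := (hlim'.add_const (lpNorm (fun x => |f₀ x - g x|) (ENNReal.ofReal p) μ)).rpow_const
    (p := p) (Or.inr hp0.le)
  rw [zero_add] at hbound
  filter_upwards [hbound.eventually_lt_const hc,
    eventually_lpNorm_abs_sub_le (ENNReal.one_le_ofReal.2 hp) hf hlim] with k hk hle
  exact (Real.rpow_le_rpow lpNorm_nonneg hle hp0.le).trans_lt hk

lemma integral_abs_rpow_normalize {q : ℝ} (hq : q ≠ 0) {f : α → ℝ}
    (hf : 0 < ∫ x, |f x| ^ q ∂μ) :
    ∫ x, |(∫ y, |f y| ^ q ∂μ) ^ (-q⁻¹) * f x| ^ q ∂μ = 1 := by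
  set I := ∫ y, |f y| ^ q ∂μ
  have hI : 0 ≤ I ^ (-q⁻¹) := Real.rpow_nonneg hf.le _
  simp only [abs_mul, abs_of_nonneg hI, Real.mul_rpow hI (abs_nonneg _), integral_const_mul]
  rw [← Real.rpow_mul hf.le, neg_mul, inv_mul_cancel₀ hq, Real.rpow_neg_one,
    inv_mul_cancel₀ hf.ne']

end Lp

section AddHaar

lemma integrableOn_Ioi_min_rpow_mul_rpow {L M p σ : ℝ} (hL : 0 ≤ L) (hM : 0 ≤ M) (hσ : 0 < σ)
    (hσp : σ < p) :
    IntegrableOn (fun r : ℝ => min (L * r) M ^ p * r ^ (-1 - σ)) (Ioi 0) := by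
  have hp : 0 ≤ p := (hσ.trans hσp).le
  have hmeas : Measurable fun r : ℝ => min (L * r) M ^ p * r ^ (-1 - σ) := by fun_prop
  rw [← Ioc_union_Ioi_eq_Ioi (zero_le_one' ℝ), integrableOn_union]
  constructor
  · have hint : IntegrableOn (fun r : ℝ => L ^ p * r ^ (p - 1 - σ)) (Ioc 0 1) := by
      refine Integrable.const_mul ?_ _
      rw [← IntegrableOn, ← intervalIntegrable_iff_integrableOn_Ioc_of_le zero_le_one]
      exact intervalIntegral.intervalIntegrable_rpow' (by linarith)
    refine hint.mono' hmeas.aestronglyMeasurable ?_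
    filter_upwards [ae_restrict_mem measurableSet_Ioc] with r ⟨hr, _⟩
    rw [Real.norm_of_nonneg (by positivity)]
    calc min (L * r) M ^ p * r ^ (-1 - σ) ≤ (L * r) ^ p * r ^ (-1 - σ) := by
          gcongr
          exact min_le_left _ _
      _ = L ^ p * r ^ (p - 1 - σ) := by
          rw [Real.mul_rpow hL hr.le, mul_assoc, ← Real.rpow_add hr]
          ring_nf
  · have hint : IntegrableOn (fun r : ℝ => M ^ p * r ^ (-1 - σ)) (Ioi 1) :=
      (integrableOn_Ioi_rpow_of_lt (by linarith) zero_lt_one).const_mul _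
    refine hint.mono' hmeas.aestronglyMeasurable ?_
    filter_upwards [ae_restrict_mem measurableSet_Ioi] with r hr
    have hr0 : 0 < r := zero_lt_one.trans hr
    rw [Real.norm_of_nonneg (by positivity)]
    gcongr
    exact min_le_right _ _

variable {E : Type*} [NormedAddCommGroup E] [NormedSpace ℝ E] [FiniteDimensional ℝ E]
  [MeasurableSpace E] [BorelSpace E] {μ : Measure E} [μ.IsAddHaarMeasure]

lemma integrable_min_norm_rpow_div_norm_rpow {L M p σ : ℝ} (hL : 0 ≤ L) (hM : 0 ≤ M) (hσ : 0 < σ)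
    (hσp : σ < p) :
    Integrable (fun h : E => min (L * ‖h‖) M ^ p / ‖h‖ ^ (Module.finrank ℝ E + σ)) μ := by
  rcases subsingleton_or_nontrivial E with _ | _
  · exact .of_finite
  · refine (integrable_fun_norm_addHaar μ
      (f := fun r : ℝ => min (L * r) M ^ p / r ^ (Module.finrank ℝ E + σ))).2
      ((integrableOn_Ioi_min_rpow_mul_rpow hL hM hσ hσp).congr_fun (fun r hr => ?_)
        measurableSet_Ioi)
    have hexp : (-1 - σ : ℝ) = (Module.finrank ℝ E - 1 : ℕ) - (Module.finrank ℝ E + σ) := by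
      rw [Nat.cast_sub Module.finrank_pos]
      push_cast
      ring
    beta_reduce
    rw [smul_eq_mul, mul_div_left_comm, hexp, Real.rpow_sub hr, Real.rpow_natCast]

lemma integrable_indicator_fst_mul_comp_sub {S : Set E} (hS : MeasurableSet S) (hμS : μ S ≠ ∞)
    {k : E → ℝ} (hk : Integrable k μ) :
    Integrable (fun z : E × E => S.indicator (fun _ => (1 : ℝ)) z.1 * k (z.2 - z.1)) (μ.prod μ) :=
  (measurePreserving_prod_sub μ μ).integrable_comp_of_integrable
    (((integrable_indicator_iff hS).2 (integrableOn_const hμS)).mul_prod hk)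

lemma measure_compl_ball_ne_zero [Nontrivial E] (x : E) (R : ℝ) : μ (ball x R)ᶜ ≠ 0 := by
  have := NormedSpace.noncompactSpace ℝ E
  rw [measure_compl measurableSet_ball measure_ball_lt_top.ne,
    measure_univ_of_isAddLeftInvariant, ENNReal.top_sub measure_ball_lt_top.ne]
  exact ENNReal.top_ne_zero

end AddHaar

section GagliardoQuotient

variable {N : ℕ} {p s : ℝ}

/-- The Gagliardo difference quotient of order `s` of `u`, normalised so that the integral of the
`p`-th power of its absolute value is `gag N p s u`. -/
noncomputable def gagQuot (p s : ℝ) (u : Euc N → ℝ) (z : Euc N × Euc N) : ℝ :=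
  (u z.1 - u z.2) / ‖z.1 - z.2‖ ^ ((N + s * p) / p)

lemma abs_gagQuot_rpow (hp : p ≠ 0) (u : Euc N → ℝ) (z : Euc N × Euc N) :
    |gagQuot p s u z| ^ p = |u z.1 - u z.2| ^ p / ‖z.1 - z.2‖ ^ (N + s * p) := by
  have hden : 0 ≤ ‖z.1 - z.2‖ ^ ((N + s * p) / p) := by positivity
  rw [gagQuot, abs_div, abs_of_nonneg hden, Real.div_rpow (abs_nonneg _) hden,
    ← Real.rpow_mul (norm_nonneg _), div_mul_cancel₀ _ hp]

lemma gag_eq_integral_gagQuot (hp : p ≠ 0) (u : Euc N → ℝ) :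
    gag N p s u = ∫ z, |gagQuot p s u z| ^ p :=
  integral_congr_ae (.of_forall fun z => (abs_gagQuot_rpow hp u z).symm)

lemma gagQuot_sub (u v : Euc N → ℝ) (z : Euc N × Euc N) :
    gagQuot p s (fun x => u x - v x) z = gagQuot p s u z - gagQuot p s v z := by
  simp only [gagQuot]
  ring

lemma gagQuot_mul (u v : Euc N → ℝ) (z : Euc N × Euc N) :
    gagQuot p s (fun x => u x * v x) z = u z.1 * gagQuot p s v z + v z.2 * gagQuot p s u z := by
  simp only [gagQuot]
  ring

lemma measurable_gagQuot {u : Euc N → ℝ} (hu : Continuous u) :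
    Measurable (gagQuot p s u) := by
  unfold gagQuot
  fun_prop

lemma gag_nonneg (u : Euc N → ℝ) : 0 ≤ gag N p s u :=
  integral_nonneg fun _ => by positivity

lemma gag_const_mul {a : ℝ} (ha : 0 ≤ a) (u : Euc N → ℝ) :
    gag N p s (fun x => a * u x) = a ^ p * gag N p s u := by
  simp only [gag, ← mul_sub, abs_mul, abs_of_nonneg ha, Real.mul_rpow ha (abs_nonneg _),
    mul_div_assoc, integral_const_mul]

lemma abs_sub_rpow_div_le_of_tsupport (hp : 0 < p) {u : Euc N → ℝ} {k : Euc N → ℝ}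
    (hk : ∀ x y, |u x - u y| ^ p / ‖x - y‖ ^ (N + s * p) ≤ k (x - y)) (hk0 : ∀ x, 0 ≤ k x)
    (hk_neg : ∀ x, k (-x) = k x) (z : Euc N × Euc N) :
    |u z.1 - u z.2| ^ p / ‖z.1 - z.2‖ ^ (N + s * p) ≤
      (tsupport u).indicator (fun _ => (1 : ℝ)) z.1 * k (z.2 - z.1) +
        (tsupport u).indicator (fun _ => (1 : ℝ)) z.2 * k (z.1 - z.2) := by
  rw [← neg_sub z.1 z.2, hk_neg]
  have hz := hk z.1 z.2
  have hz0 := hk0 (z.1 - z.2)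
  by_cases h1 : z.1 ∈ tsupport u <;> by_cases h2 : z.2 ∈ tsupport u
  · simp only [h1, h2, indicator_of_mem]
    linarith
  · simpa [h1, h2] using hz
  · simpa [h1, h2] using hz
  · simp [h1, h2, image_eq_zero_of_notMem_tsupport, Real.zero_rpow hp.ne']

lemma memLp_gagQuot (hp : 0 < p) (hs0 : 0 < s) (hs1 : s < 1) {u : Euc N → ℝ} {L : ℝ≥0}
    (hu : LipschitzWith L u) (hc : HasCompactSupport u) :
    MemLp (gagQuot p s u) (ENNReal.ofReal p) := by
  obtain ⟨M, hM⟩ := hc.exists_bound_of_continuous hu.continuous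
  have hM0 : 0 ≤ M := (norm_nonneg _).trans (hM 0)
  let k (h : Euc N) : ℝ := min (L * ‖h‖) (2 * M) ^ p / ‖h‖ ^ (N + s * p)
  have hk : Integrable k := by
    simpa only [finrank_euclideanSpace_fin] using
      integrable_min_norm_rpow_div_norm_rpow (μ := (volume : Measure (Euc N))) L.coe_nonneg
        (by positivity : 0 ≤ 2 * M) (mul_pos hs0 hp) (by nlinarith : s * p < p)
  have hint := integrable_indicator_fst_mul_comp_sub hc.isCompact.measurableSet
    hc.isCompact.measure_lt_top.ne hk
  rw [← integrable_norm_rpow_iff (measurable_gagQuot hu.continuous).aestronglyMeasurable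
    (ENNReal.ofReal_pos.2 hp).ne' ENNReal.ofReal_ne_top, ENNReal.toReal_ofReal hp.le]
  refine (hint.add hint.swap).mono' ?_ (.of_forall fun z => ?_)
  · exact ((measurable_gagQuot hu.continuous).norm.pow_const p).aestronglyMeasurable
  · rw [Real.norm_of_nonneg (by positivity), Real.norm_eq_abs, abs_gagQuot_rpow hp.ne']
    refine abs_sub_rpow_div_le_of_tsupport hp (k := k) (fun x y => ?_)
      (fun x => by positivity) (fun x => by simp only [k, norm_neg]) z
    unfold k
    gcongr
    refine le_min ?_ ?_
    · simpa only [dist_eq_norm, Real.norm_eq_abs] using hu.dist_le_mul x y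
    · have hx := hM x
      have hy := hM y
      rw [Real.norm_eq_abs] at hx hy
      linarith [abs_sub (u x) (u y)]

lemma gag_comp_le (hp : 0 < p) {H : ℝ → ℝ} {K : ℝ≥0} (hH : LipschitzWith K H) {u : Euc N → ℝ}
    (hu : MemLp (gagQuot p s u) (ENNReal.ofReal p)) :
    gag N p s (fun x => H (u x)) ≤ K ^ p * gag N p s u := by
  rw [gag_eq_integral_gagQuot hp.ne' u, gag, ← integral_const_mul]
  refine integral_mono_of_nonneg (.of_forall fun z => by positivity)
    (((integrable_abs_rpow_iff_memLp_abs hp).2 hu.abs).const_mul _) (.of_forall fun z => ?_)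
  beta_reduce
  rw [abs_gagQuot_rpow hp.ne', ← mul_div_assoc, ← Real.mul_rpow K.coe_nonneg (abs_nonneg _)]
  gcongr
  simpa only [Real.dist_eq] using hH.dist_le_mul (u z.1) (u z.2)

/- A function vanishing at `x₀` is recovered from its difference quotients at `(x₀, y)`. -/
lemma ae_tendsto_zero_of_gagQuot {Ω : Set (Euc N)} (hΩ : volume Ωᶜ ≠ 0) {ψ : ℕ → Euc N → ℝ}
    (hψ : ∀ k, ∀ x ∉ Ω, ψ k x = 0)
    (hlim : ∀ᵐ z, Tendsto (fun k => gagQuot p s (ψ k) z) atTop (𝓝 0)) :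
    ∀ᵐ y, Tendsto (fun k => ψ k y) atTop (𝓝 0) := by
  obtain ⟨x₀, hx₀, hae⟩ := ((frequently_ae_mem_iff.2 hΩ).and_eventually
    (Measure.ae_ae_of_ae_prod hlim)).exists
  filter_upwards [hae] with y hy
  rcases eq_or_ne x₀ y with rfl | hne
  · simpa only [hψ _ _ hx₀] using tendsto_const_nhds
  · have hden : ‖x₀ - y‖ ^ ((N + s * p) / p) ≠ 0 :=
      (Real.rpow_pos_of_pos (norm_pos_iff.2 (sub_ne_zero.2 hne)) _).ne'
    have hψ_eq (k : ℕ) : -(gagQuot p s (ψ k) (x₀, y) * ‖x₀ - y‖ ^ ((N + s * p) / p)) = ψ k y := by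
      rw [gagQuot, div_mul_cancel₀ _ hden, hψ k x₀ hx₀, zero_sub, neg_neg]
    simpa only [hψ_eq, zero_mul, neg_zero] using
      (hy.mul_const (‖x₀ - y‖ ^ ((N + s * p) / p))).neg

end GagliardoQuotient

namespace TestOn

variable {N : ℕ} {p s : ℝ} {A B : Set (Euc N)} {u v : Euc N → ℝ}

lemma mono (hAB : A ⊆ B) (hu : TestOn A u) : TestOn B u :=
  ⟨hu.1, hu.2.1, hu.2.2.trans hAB⟩

lemma of_tsupport_subset (hu : TestOn A u) (hv : ContDiff ℝ (⊤ : ℕ∞) v)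
    (hvu : tsupport v ⊆ tsupport u) : TestOn A v :=
  ⟨hv, hu.2.1.of_isClosed_subset (isClosed_tsupport v) hvu, hvu.trans hu.2.2⟩

lemma const_mul (hu : TestOn A u) (a : ℝ) : TestOn A fun x => a * u x :=
  hu.of_tsupport_subset (contDiff_const.mul hu.1) tsupport_mul_subset_right

lemma eq_zero_of_notMem (hu : TestOn A u) {x : Euc N} (hx : x ∉ A) : u x = 0 :=
  image_eq_zero_of_notMem_tsupport fun hx' => hx (hu.2.2 hx')

lemma memLp (hu : TestOn A u) (q : ℝ≥0∞) : MemLp u q :=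
  hu.1.continuous.memLp_of_hasCompactSupport hu.2.1

lemma setIntegral_abs_rpow (hu : TestOn A u) {q : ℝ} (hq : q ≠ 0) :
    ∫ x in A, |u x| ^ q = ∫ x, |u x| ^ q :=
  setIntegral_eq_integral_of_forall_compl_eq_zero fun x hx => by
    rw [hu.eq_zero_of_notMem hx, abs_zero, Real.zero_rpow hq]

lemma memLp_gagQuot (hu : TestOn A u) (hp : 0 < p) (hs0 : 0 < s) (hs1 : s < 1) :
    MemLp (gagQuot p s u) (ENNReal.ofReal p) := by
  obtain ⟨L, hL⟩ := hu.1.lipschitzWith_of_hasCompactSupport hu.2.1 (by simp)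
  exact _root_.memLp_gagQuot hp hs0 hs1 hL hu.2.1

end TestOn

section CapacityCutoff

variable {N : ℕ} {p s : ℝ} {F Ω : Set (Euc N)}

lemma exists_testOn_one_le (hF : IsCompact F) (hΩ : IsOpen Ω) (hFΩ : F ⊆ Ω) :
    ∃ φ : Euc N → ℝ, TestOn Ω φ ∧ ∀ x ∈ F, 1 ≤ φ x := by
  obtain ⟨K, hK, hFK, hKΩ⟩ := exists_compact_between hF hΩ hFΩ
  obtain ⟨φ, hφ1, hφ0, -⟩ := exists_contMDiffMap_one_nhds_of_subset_interior
    (modelWithCornersSelf ℝ (Euc N)) (n := (⊤ : ℕ∞)) hF.isClosed hFK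
  have hsupp : tsupport φ ⊆ K := closure_minimal
    (fun x hx => not_imp_comm.1 (hφ0 x) hx) hK.isClosed
  exact ⟨φ, ⟨φ.contMDiff.contDiff, hK.of_isClosed_subset (isClosed_tsupport φ) hsupp,
    hsupp.trans hKΩ⟩, fun x hx => (hφ1.self_of_nhdsSet x hx).ge⟩

lemma exists_gag_lt_of_fcap_lt (hF : IsCompact F) (hΩ : IsOpen Ω) (hFΩ : F ⊆ Ω) {c : ℝ}
    (hc : fcap N p s F Ω < c) :
    ∃ φ : Euc N → ℝ, TestOn Ω φ ∧ (∀ x ∈ F, 1 ≤ φ x) ∧ gag N p s φ < c := by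
  obtain ⟨φ₀, hφ₀, hφ₀F⟩ := exists_testOn_one_le hF hΩ hFΩ
  unfold fcap at hc
  obtain ⟨_, ⟨φ, hφ, hφF, rfl⟩, hlt⟩ := exists_lt_of_csInf_lt (by exact ⟨_, φ₀, hφ₀, hφ₀F, rfl⟩) hc
  exact ⟨φ, hφ, hφF, hlt⟩

lemma exists_lipschitzWith_smoothTransition : ∃ K : ℝ≥0, LipschitzWith K Real.smoothTransition := by
  obtain ⟨K, hK⟩ := (Real.smoothTransition.contDiff (n := 1)).contDiffOn.exists_lipschitzOnWith
    one_ne_zero (convex_Icc (0 : ℝ) 1) isCompact_Icc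
  refine ⟨K * 1, ?_⟩
  have h := (lipschitzOnWith_iff_restrict.1 hK).comp (LipschitzWith.projIcc (zero_le_one' ℝ))
  simpa only [Function.comp_def, domRestrict_apply, Real.smoothTransition.projIcc] using h

lemma exists_gag_cutoff_le (hp : 0 < p) (hs0 : 0 < s) (hs1 : s < 1) :
    ∃ C : ℝ, ∀ φ : Euc N → ℝ, TestOn Ω φ → (∀ x ∈ F, 1 ≤ φ x) →
      ∃ ψ : Euc N → ℝ, TestOn Ω ψ ∧ (∀ x, ψ x ∈ Icc (0 : ℝ) 1) ∧ (∀ᶠ x in 𝓝ˢ F, ψ x = 1) ∧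
        gag N p s ψ ≤ C * gag N p s φ := by
  obtain ⟨K, hK⟩ := exists_lipschitzWith_smoothTransition
  let H (t : ℝ) : ℝ := Real.smoothTransition (2 * t)
  have hHlip : LipschitzWith (K * ‖(2 : ℝ)‖₊) H := hK.comp (lipschitzWith_smul (2 : ℝ))
  have hHdiff : ContDiff ℝ (⊤ : ℕ∞) H :=
    Real.smoothTransition.contDiff.comp (contDiff_const.mul contDiff_id)
  have hH0 : H 0 = 0 := by simp only [H, mul_zero, Real.smoothTransition.zero]
  refine ⟨_, fun φ hφ hφF => ⟨fun x => H (φ x), ?_, fun x => ?_, ?_,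
    gag_comp_le hp hHlip (hφ.memLp_gagQuot hp hs0 hs1)⟩⟩
  · exact hφ.of_tsupport_subset (hHdiff.comp hφ.1) (tsupport_comp_subset hH0 φ)
  · exact ⟨Real.smoothTransition.nonneg _, Real.smoothTransition.le_one _⟩
  · have hopen : IsOpen {x | 1 / 2 < φ x} := isOpen_lt continuous_const hφ.1.continuous
    filter_upwards [hopen.mem_nhdsSet.2 fun x hx => one_half_lt_one.trans_le (hφF x hx)] with x hx
    exact Real.smoothTransition.one_of_one_le (by linarith [mem_ofPred.1 hx])

/-- `ψ` is a sequence of cutoffs in `C^∞_0(Ω)` removing a neighbourhood of `F`, whose Gagliardo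
seminorms and values tend to zero. Vanishing of the seminorms is phrased through `gagQuot` so that
it can be combined with the triangle inequality in `L^p`. -/
structure IsVanishingCutoff (p s : ℝ) (F Ω : Set (Euc N)) (ψ : ℕ → Euc N → ℝ) : Prop where
  testOn (k : ℕ) : TestOn Ω (ψ k)
  mem_Icc (k : ℕ) (x : Euc N) : ψ k x ∈ Icc (0 : ℝ) 1
  eventually_eq_one (k : ℕ) : ∀ᶠ x in 𝓝ˢ F, ψ k x = 1
  tendsto_eLpNorm_gagQuot :
    Tendsto (fun k => eLpNorm (gagQuot p s (ψ k)) (ENNReal.ofReal p)) atTop (𝓝 0)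
  ae_tendsto : ∀ᵐ x, Tendsto (fun k => ψ k x) atTop (𝓝 0)

lemma exists_isVanishingCutoff (hp : 0 < p) (hs0 : 0 < s) (hs1 : s < 1) (hF : IsCompact F)
    (hΩ : IsOpen Ω) (hΩc : volume Ωᶜ ≠ 0) (hFΩ : F ⊆ Ω) (hcap : fcap N p s F Ω = 0) :
    ∃ ψ : ℕ → Euc N → ℝ, IsVanishingCutoff p s F Ω ψ := by
  obtain ⟨C, hC⟩ := exists_gag_cutoff_le (N := N) (F := F) (Ω := Ω) hp hs0 hs1
  choose φ hφ hφF hφlt using fun k : ℕ => exists_gag_lt_of_fcap_lt (p := p) (s := s) hF hΩ hFΩ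
    (hcap.trans_lt (Nat.one_div_pos_of_nat (α := ℝ) (n := k)))
  choose ψ hψ hψ01 hψ1 hψgag using fun k => hC (φ k) (hφ k) (hφF k)
  have hφlim : Tendsto (fun k => gag N p s (φ k)) atTop (𝓝 0) :=
    squeeze_zero (fun k => gag_nonneg _) (fun k => (hφlt k).le)
      tendsto_one_div_add_atTop_nhds_zero_nat
  have hψlim : Tendsto (fun k => gag N p s (ψ k)) atTop (𝓝 0) :=
    squeeze_zero (fun k => gag_nonneg _) hψgag (by simpa using hφlim.const_mul C)
  have hmem (k : ℕ) := (hψ k).memLp_gagQuot hp hs0 hs1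
  simp only [gag_eq_integral_gagQuot hp.ne'] at hψlim
  have hquot := (tendsto_eLpNorm_zero_iff_integral hp hmem).2 hψlim
  obtain ⟨n, hn, hae⟩ := exists_strictMono_ae_tendsto_zero_of_eLpNorm (ENNReal.ofReal_pos.2 hp).ne'
    (fun k => (hmem k).aestronglyMeasurable) hquot
  exact ⟨fun k => ψ (n k), fun k => hψ _, fun k => hψ01 _, fun k => hψ1 _,
    hquot.comp hn.tendsto_atTop,
    ae_tendsto_zero_of_gagQuot hΩc (fun k x hx => (hψ _).eq_zero_of_notMem hx) hae⟩

end CapacityCutoff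

namespace IsVanishingCutoff

variable {N : ℕ} {p s : ℝ} {F Ω A : Set (Euc N)} {ψ : ℕ → Euc N → ℝ} {u : Euc N → ℝ}

lemma abs_le_one (hψ : IsVanishingCutoff p s F Ω ψ) (k : ℕ) (x : Euc N) : |ψ k x| ≤ 1 := by
  rw [abs_of_nonneg (hψ.mem_Icc k x).1]
  exact (hψ.mem_Icc k x).2

lemma testOn_mul_one_sub (hψ : IsVanishingCutoff p s F Ω ψ) (hu : TestOn A u) (k : ℕ) :
    TestOn (A \ F) fun x => u x * (1 - ψ k x) := by
  have hw : TestOn A fun x => u x * (1 - ψ k x) :=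
    hu.of_tsupport_subset (hu.1.mul (contDiff_const.sub (hψ.testOn k).1)) tsupport_mul_subset_left
  refine ⟨hw.1, hw.2.1, fun x hx => ⟨hw.2.2 hx, fun hxF => ?_⟩⟩
  refine notMem_tsupport_iff_eventuallyEq.2 ?_ hx
  filter_upwards [(hψ.eventually_eq_one k).filter_mono (nhds_le_nhdsSet hxF)] with y hy
  rw [hy, sub_self, mul_zero, Pi.zero_apply]

lemma tendsto_eLpNorm_sub (hψ : IsVanishingCutoff p s F Ω ψ) (hp : 0 < p) (hu : TestOn A u) :
    Tendsto (fun k => eLpNorm (fun x => u x * (1 - ψ k x) - u x) (ENNReal.ofReal p)) atTop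
      (𝓝 0) := by
  have hsub (k : ℕ) : (fun x => u x * (1 - ψ k x) - u x) = -fun x => ψ k x * u x := by
    ext x
    simp only [Pi.neg_apply]
    ring
  simp only [hsub, eLpNorm_neg]
  exact tendsto_eLpNorm_mul_zero_of_ae_tendsto_zero hp
    (fun k => (hψ.testOn k).1.continuous.aestronglyMeasurable) hψ.abs_le_one hψ.ae_tendsto
    (hu.memLp _)

/- The product rule splits the quotient of `u * ψ k` into a bounded multiple of the quotient of
`ψ k`, small in `L^p`, and the fixed quotient of `u` multiplied by a sequence tending to zero. -/
lemma tendsto_eLpNorm_gagQuot_mul (hψ : IsVanishingCutoff p s F Ω ψ) (hp : 1 ≤ p) (hs0 : 0 < s)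
    (hs1 : s < 1) (hu : TestOn A u) :
    Tendsto (fun k => eLpNorm (gagQuot p s fun x => u x * ψ k x) (ENNReal.ofReal p)) atTop
      (𝓝 0) := by
  have hp0 : 0 < p := zero_lt_one.trans_le hp
  have hucont := hu.1.continuous
  have hψcont (k : ℕ) := (hψ.testOn k).1.continuous
  obtain ⟨M, hM⟩ := hu.2.1.exists_bound_of_continuous hucont
  have hfst : Tendsto (fun k => eLpNorm (fun z => u z.1 * gagQuot p s (ψ k) z)
      (ENNReal.ofReal p)) atTop (𝓝 0) := by
    have hbound := ENNReal.Tendsto.const_mul (a := ENNReal.ofReal M)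
      hψ.tendsto_eLpNorm_gagQuot (Or.inr ENNReal.ofReal_ne_top)
    rw [mul_zero] at hbound
    refine tendsto_of_tendsto_of_tendsto_of_le_of_le tendsto_const_nhds hbound
      (fun k => zero_le) fun k => eLpNorm_le_mul_eLpNorm_of_ae_le_mul (.of_forall fun z => ?_) _
    rw [norm_mul]
    exact mul_le_mul_of_nonneg_right (hM z.1) (norm_nonneg _)
  have hsnd : Tendsto (fun k => eLpNorm (fun z : Euc N × Euc N => ψ k z.2 * gagQuot p s u z)
      (ENNReal.ofReal p)) atTop (𝓝 0) :=
    tendsto_eLpNorm_mul_zero_of_ae_tendsto_zero hp0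
      (fun k => ((hψcont k).comp continuous_snd).aestronglyMeasurable)
      (fun k z => hψ.abs_le_one k z.2)
      (Measure.quasiMeasurePreserving_snd.ae hψ.ae_tendsto) (hu.memLp_gagQuot hp0 hs0 hs1)
  have hsum := hfst.add hsnd
  rw [add_zero] at hsum
  refine tendsto_of_tendsto_of_tendsto_of_le_of_le tendsto_const_nhds hsum
    (fun k => zero_le) fun k => ?_
  rw [funext (gagQuot_mul u (ψ k))]
  refine eLpNorm_add_le (Measurable.aestronglyMeasurable ?_) (Measurable.aestronglyMeasurable ?_)
    (ENNReal.one_le_ofReal.2 hp)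
  · exact (hucont.comp continuous_fst).measurable.mul (measurable_gagQuot (hψcont k))
  · exact ((hψcont k).comp continuous_snd).measurable.mul (measurable_gagQuot hucont)

lemma tendsto_eLpNorm_gagQuot_sub (hψ : IsVanishingCutoff p s F Ω ψ) (hp : 1 ≤ p) (hs0 : 0 < s)
    (hs1 : s < 1) (hu : TestOn A u) :
    Tendsto (fun k => eLpNorm (fun z => gagQuot p s (fun x => u x * (1 - ψ k x)) z -
      gagQuot p s u z) (ENNReal.ofReal p)) atTop (𝓝 0) := by
  have hsub (k : ℕ) : (fun z => gagQuot p s (fun x => u x * (1 - ψ k x)) z - gagQuot p s u z) =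
      -gagQuot p s fun x => u x * ψ k x := by
    ext z
    simp only [gagQuot, Pi.neg_apply]
    ring
  simpa only [hsub, eLpNorm_neg] using hψ.tendsto_eLpNorm_gagQuot_mul hp hs0 hs1 hu

lemma eventually_integral_abs_sub_rpow_lt (hψ : IsVanishingCutoff p s F Ω ψ) (hp : 1 ≤ p)
    (hu : TestOn A u) {V : Euc N → ℝ} {c : ℝ} (hc : ∫ x, |u x - V x| ^ p < c) :
    ∀ᶠ k in atTop, ∫ x, |u x * (1 - ψ k x) - V x| ^ p < c :=
  _root_.eventually_integral_abs_sub_rpow_lt hp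
    (fun k => ((hψ.testOn_mul_one_sub hu k).memLp _).sub (hu.memLp _))
    (hψ.tendsto_eLpNorm_sub (zero_lt_one.trans_le hp) hu) hc

lemma eventually_gag_sub_lt (hψ : IsVanishingCutoff p s F Ω ψ) (hp : 1 ≤ p) (hs0 : 0 < s)
    (hs1 : s < 1) (hu : TestOn A u) {V : Euc N → ℝ} {c : ℝ}
    (hc : gag N p s (fun x => u x - V x) < c) :
    ∀ᶠ k in atTop, gag N p s (fun x => u x * (1 - ψ k x) - V x) < c := by
  have hp0 : 0 < p := zero_lt_one.trans_le hp
  simp only [gag_eq_integral_gagQuot hp0.ne', gagQuot_sub] at hc ⊢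
  exact _root_.eventually_integral_abs_sub_rpow_lt hp
    (fun k => ((hψ.testOn_mul_one_sub hu k).memLp_gagQuot hp0 hs0 hs1).sub
      (hu.memLp_gagQuot hp0 hs0 hs1))
    (hψ.tendsto_eLpNorm_gagQuot_sub hp hs0 hs1 hu) hc

lemma eventually_integral_add_gag_lt (hψ : IsVanishingCutoff p s F Ω ψ) (hp : 1 ≤ p) (hs0 : 0 < s)
    (hs1 : s < 1) (hu : TestOn A u) {V : Euc N → ℝ} {c : ℝ}
    (hc : (∫ x, |u x - V x| ^ p) + gag N p s (fun x => u x - V x) < c) :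
    ∀ᶠ k in atTop, (∫ x, |u x * (1 - ψ k x) - V x| ^ p) +
      gag N p s (fun x => u x * (1 - ψ k x) - V x) < c := by
  obtain ⟨a, ha, hac⟩ := exists_between (lt_sub_iff_add_lt.2 hc)
  filter_upwards [hψ.eventually_integral_abs_sub_rpow_lt hp hu ha,
    hψ.eventually_gag_sub_lt hp hs0 hs1 hu (lt_sub_comm.1 hac)] with k hk hk'
  linarith

lemma tendsto_integral_abs_rpow (hψ : IsVanishingCutoff p s F Ω ψ) (hu : TestOn A u) {q : ℝ}
    (hq : 0 < q) :
    Tendsto (fun k => ∫ x, |u x * (1 - ψ k x)| ^ q) atTop (𝓝 (∫ x, |u x| ^ q)) := by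
  refine tendsto_integral_abs_rpow_of_dominated hq
    (fun k => (hψ.testOn_mul_one_sub hu k).1.continuous.aestronglyMeasurable) (hu.memLp _)
    (fun k x => ?_) ?_
  · rw [abs_mul, abs_of_nonneg (sub_nonneg.2 (hψ.mem_Icc k x).2)]
    exact mul_le_of_le_one_right (abs_nonneg _) (sub_le_self _ (hψ.mem_Icc k x).1)
  · filter_upwards [hψ.ae_tendsto] with x hx
    simpa only [sub_zero, mul_one] using (hx.const_sub 1).const_mul (u x)

lemma memW0_diff (hψ : IsVanishingCutoff p s F Ω ψ) (hp : 1 ≤ p) (hs0 : 0 < s) (hs1 : s < 1)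
    {V : Euc N → ℝ} (hV : MemW0 N p s A V) : MemW0 N p s (A \ F) V := by
  obtain ⟨u, hu, hlim⟩ := hV
  choose k hk using fun n => (hψ.eventually_integral_add_gag_lt hp hs0 hs1 (hu n)
    (lt_add_of_pos_right _ (Nat.one_div_pos_of_nat (α := ℝ) (n := n)))).exists
  refine ⟨fun n x => u n x * (1 - ψ (k n) x), fun n => hψ.testOn_mul_one_sub (hu n) (k n),
    squeeze_zero (fun n => ?_) (fun n => (hk n).le) ?_⟩
  · exact add_nonneg (integral_nonneg fun x => by positivity) (gag_nonneg _)
  · simpa only [add_zero] using hlim.add tendsto_one_div_add_atTop_nhds_zero_nat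

end IsVanishingCutoff

section PrincipalFrequency

variable {N : ℕ} {p q s : ℝ} {A F Ω : Set (Euc N)} {ψ : ℕ → Euc N → ℝ}

lemma MemW0.mono {B : Set (Euc N)} {V : Euc N → ℝ} (hAB : A ⊆ B) (hV : MemW0 N p s A V) :
    MemW0 N p s B V := by
  obtain ⟨u, hu, hlim⟩ := hV
  exact ⟨u, fun n => (hu n).mono hAB, hlim⟩

lemma lam_eq_sInf_integral (hq : q ≠ 0) :
    lam N p q s A = sInf {c | ∃ u : Euc N → ℝ, TestOn A u ∧ ∫ x, |u x| ^ q = 1 ∧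
      c = gag N p s u} := by
  refine congrArg sInf (ext fun c => exists_congr fun u => and_congr_right fun hu => ?_)
  rw [hu.setIntegral_abs_rpow hq]

lemma IsVanishingCutoff.exists_normalized_gag_lt (hψ : IsVanishingCutoff p s F Ω ψ) (hp : 1 ≤ p)
    (hs0 : 0 < s) (hs1 : s < 1) (hq : 0 < q) {u : Euc N → ℝ} (hu : TestOn A u)
    (hu1 : ∫ x, |u x| ^ q = 1) {d : ℝ} (hd : gag N p s u < d) :
    ∃ v, TestOn (A \ F) v ∧ ∫ x, |v x| ^ q = 1 ∧ gag N p s v < d := by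
  obtain ⟨c, huc, hcd⟩ := exists_between hd
  let w (k : ℕ) (x : Euc N) : ℝ := u x * (1 - ψ k x)
  have hI : Tendsto (fun k => ∫ x, |w k x| ^ q) atTop (𝓝 1) :=
    hu1 ▸ hψ.tendsto_integral_abs_rpow hu hq
  have hscale : Tendsto (fun k => ((∫ x, |w k x| ^ q) ^ (-q⁻¹)) ^ p * c) atTop (𝓝 c) := by
    have h := ((hI.rpow_const (p := -q⁻¹) (Or.inl one_ne_zero)).rpow_const (p := p)
      (Or.inl (by simp))).mul_const c
    simpa only [Real.one_rpow, one_mul] using h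
  have hgag : ∀ᶠ k in atTop, gag N p s (w k) < c := by
    simpa only [sub_zero] using hψ.eventually_gag_sub_lt hp hs0 hs1 hu (V := fun _ => 0)
      (by simpa only [sub_zero] using huc)
  obtain ⟨k, hkI, hkd, hkc⟩ :=
    ((hI.eventually_const_lt one_pos).and ((hscale.eventually_lt_const hcd).and hgag)).exists
  have ha : 0 ≤ (∫ x, |w k x| ^ q) ^ (-q⁻¹) := Real.rpow_nonneg hkI.le _
  refine ⟨_, (hψ.testOn_mul_one_sub hu k).const_mul ((∫ x, |w k x| ^ q) ^ (-q⁻¹)),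
    integral_abs_rpow_normalize hq.ne' hkI, ?_⟩
  rw [gag_const_mul ha]
  exact (mul_le_mul_of_nonneg_left hkc.le (Real.rpow_nonneg ha p)).trans_lt hkd

lemma IsVanishingCutoff.lam_diff (hψ : IsVanishingCutoff p s F Ω ψ) (hp : 1 ≤ p) (hs0 : 0 < s)
    (hs1 : s < 1) (hq : 0 < q) : lam N p q s A = lam N p q s (A \ F) := by
  rw [lam_eq_sInf_integral hq.ne', lam_eq_sInf_integral hq.ne']
  refine sInf_eq_sInf_of_forall_exists_lt ⟨0, ?_⟩ ?_ ?_
  · rintro _ ⟨u, -, -, rfl⟩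
    exact gag_nonneg u
  · rintro c ⟨u, hu, hu1, hc⟩
    exact ⟨u, hu.mono sdiff_subset, hu1, hc⟩
  · rintro _ ⟨u, hu, hu1, rfl⟩ d hd
    obtain ⟨v, hv, hv1, hvd⟩ := hψ.exists_normalized_gag_lt hp hs0 hs1 hq hu hu1 hd
    exact ⟨_, ⟨v, hv, hv1, rfl⟩, hvd⟩

end PrincipalFrequency

theorem stmt17_general {N : ℕ} {p s : ℝ} (hp : 1 ≤ p) (hs0 : 0 < s) (hs1 : s < 1)
    (A : Set (Euc N)) {F Ω : Set (Euc N)} (hF : IsCompact F) (hΩ : IsOpen Ω)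
    (hΩc : volume Ωᶜ ≠ 0) (hFΩ : F ⊆ Ω) (hcap : fcap N p s F Ω = 0) :
    {V : Euc N → ℝ | MemW0 N p s (A \ F) V} = {V : Euc N → ℝ | MemW0 N p s A V} ∧
    ∀ q : ℝ, 0 < q → lam N p q s A = lam N p q s (A \ F) := by
  obtain ⟨ψ, hψ⟩ := exists_isVanishingCutoff (zero_lt_one.trans_le hp) hs0 hs1 hF hΩ hΩc hFΩ hcap
  refine ⟨Subset.antisymm ?_ ?_, fun q hq => hψ.lam_diff hp hs0 hs1 hq⟩
  · exact fun V hV => hV.mono sdiff_subset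
  · exact fun V hV => hψ.memW0_diff hp hs0 hs1 hV

theorem stmt17 (N : ℕ) (hN : 0 < N) (p s γ : ℝ) (hp : 1 ≤ p) (hs0 : 0 < s) (hs1 : s < 1)
    (hγ0 : 0 < γ) (hγ1 : γ < 1)
    (E : Set (Euc N)) (hE : IsOpen E) (hEb : Bornology.IsBounded E)
    (F : Set (Euc N)) (hF : IsCompact F) (hFE : F ⊆ E)
    (x0 : Euc N) (R : ℝ) (hFB : F ⊆ ball x0 R)
    (hcap : fcap N p s F (ball x0 R) = 0) :
    {V : Euc N → ℝ | MemW0 N p s (E \ F) V} = {V : Euc N → ℝ | MemW0 N p s E V} ∧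
    ∀ q : ℝ, 1 ≤ q → (s * p < N → q ≤ N * p / (N - s * p)) →
      lam N p q s E = lam N p q s (E \ F) := by
  have : Nonempty (Fin N) := Fin.pos_iff_nonempty.1 hN
  obtain ⟨hW, hlam⟩ := stmt17_general hp hs0 hs1 E hF isOpen_ball
    (measure_compl_ball_ne_zero x0 R) hFB hcap
  exact ⟨hW, fun q hq _ => hlam q (zero_lt_one.trans_le hq)⟩
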